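/- arXiv:2002.05141 — 2 statements merged into one kernel-verified Lean document; each statement's English description precedes it below -/
import Mathlib

section
/- Let V be a symmetric positive definite q×q real matrix, let z ∈ ℝ^q, and set W = V + z zᵀ. Then zᵀ W⁻¹ z = 1 − det(V)/det(W), and consequently zᵀ W⁻¹ z ≤ log det(W) − log det(V). -/
open Matrix

/-- for a symmetric positive definite `V` and `W = V + z zᵀ`,
`zᵀ W⁻¹ z = 1 - det V / det W` and hence `zᵀ W⁻¹ z ≤ log det W - log det V`. -/
theorem quadform_rank_one_update {q : ℕ} (V : Matrix (Fin q) (Fin q) ℝ)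
    (hV : V.PosDef) (z : Fin q → ℝ) :
    z ⬝ᵥ ((V + vecMulVec z z)⁻¹ *ᵥ z) = 1 - V.det / (V + vecMulVec z z).det ∧
      z ⬝ᵥ ((V + vecMulVec z z)⁻¹ *ᵥ z) ≤
        Real.log (V + vecMulVec z z).det - Real.log V.det := by
  have hW : (V + vecMulVec z z).PosDef := by
    have h := posSemidef_vecMulVec_self_star z
    rw [star_trivial] at h
    exact hV.add_posSemidef h
  have hv := hV.det_pos
  have hw := hW.det_pos
  set W := V + vecMulVec z z with hWdef
  have hu : IsUnit W.det := hw.ne'.isUnit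
  have hVW : V = W * (1 + vecMulVec (-(W⁻¹ *ᵥ z)) z) := by
    rw [Matrix.mul_add, Matrix.mul_one, mul_vecMulVec, mulVec_neg, mulVec_mulVec,
      mul_nonsing_inv _ hu, one_mulVec, neg_vecMulVec, hWdef]
    abel
  have hdet : V.det = W.det * (1 - z ⬝ᵥ (W⁻¹ *ᵥ z)) := by
    conv_lhs => rw [hVW]
    rw [det_mul, vecMulVec_eq Unit, det_one_add_replicateCol_mul_replicateRow,
      dotProduct_neg, sub_eq_add_neg]
  have h1 : z ⬝ᵥ (W⁻¹ *ᵥ z) = 1 - V.det / W.det := by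
    rw [hdet]
    field_simp
    ring
  refine ⟨h1, ?_⟩
  have h2 := Real.log_le_sub_one_of_pos (div_pos hv hw)
  rw [Real.log_div hv.ne' hw.ne'] at h2
  rw [h1]
  linarith
end

section
/- Let u₀, u₁, …, u_{k−1} be independent random vectors in ℝ^m, each distributed as a standard Gaussian N(0, I_m), and let p ≥ 2. Form the mp × (k−p+1) block Toeplitz matrix U whose (i,j) block (for i = 1,…,p and j = 1,…,k−p+1) is the column vector u_{k−p+i−j} (so the first block column is (u_{k−p}, u_{k−p+1}, …, u_{k−1}) stacked and block columns shift the index down by one). Fix δ > 0. If k ≥ p + 128( m p² log 9 + p log 2 + p log(1/δ) ), then with probability at least 1 − δ, (1/2)(k−p+1) I ⪯ U Uᵀ ⪯ (3/2)(k−p+1) I, where I is the mp × mp identity. -/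
open Matrix MeasureTheory ProbabilityTheory

/-- The law of a vector of `m` i.i.d. standard Gaussians. -/
noncomputable def stdGaussianPi (m : ℕ) : Measure (Fin m → ℝ) :=
  Measure.pi (fun _ => gaussianReal 0 1)

/-- The `mp × (k-p+1)` block Toeplitz matrix whose `(i,j)` block (0-based) is the
column vector `u_{k-p+i-j}`. -/
def toepU {m : ℕ} (k p : ℕ) (hpk : p ≤ k) (u : Fin k → Fin m → ℝ) :
    Matrix (Fin p × Fin m) (Fin (k - p + 1)) ℝ :=
  Matrix.of fun ir j =>
    u ⟨k - p + (ir.1 : ℕ) - (j : ℕ), by have := ir.1.isLt; omega⟩ ir.2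


lemma lintegral_exp_sq (s : ℝ) (hs : s < 1/2) :
    ∫⁻ x, ENNReal.ofReal (Real.exp (s * (x^2 - 1))) ∂(gaussianReal 0 1)
      = ENNReal.ofReal (Real.exp (-s) * √(1 / (1 - 2 * s))) := by
  have hb : 0 < 1/2 - s := by linarith
  rw [gaussianReal_of_var_ne_zero 0 one_ne_zero,
    lintegral_withDensity_eq_lintegral_mul _ (by fun_prop) (by fun_prop)]
  have h1 : ∀ x : ℝ, (gaussianPDF 0 1 * fun x => ENNReal.ofReal (Real.exp (s * (x^2 - 1)))) x
      = ENNReal.ofReal ((√(2 * Real.pi))⁻¹ * Real.exp (-s) * Real.exp (-(1/2 - s) * x ^ 2)) := by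
    intro x
    rw [Pi.mul_apply, gaussianPDF, ← ENNReal.ofReal_mul (gaussianPDFReal_nonneg _ _ _), gaussianPDFReal]
    congr 1
    simp only [NNReal.coe_one, mul_one, sub_zero]
    rw [mul_assoc, mul_assoc, ← Real.exp_add, ← Real.exp_add]
    congr 2
    ring
  simp_rw [h1]
  rw [← ofReal_integral_eq_lintegral_ofReal ((integrable_exp_neg_mul_sq hb).const_mul _)
    (Filter.Eventually.of_forall fun x => by positivity), integral_const_mul, integral_gaussian]
  congr 1
  have hp : √(Real.pi / (1/2 - s)) = √(2 * Real.pi) * √(1 / (1 - 2 * s)) := by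
    rw [← Real.sqrt_mul (by positivity)]
    congr 1
    have : 1 - 2 * s ≠ 0 := by linarith
    have : 1/2 - s ≠ 0 := hb.ne'
    rw [show (1/2 - s) = (1 - 2 * s) / 2 by ring]
    field_simp
  rw [hp]
  have : √(2 * Real.pi) ≠ 0 := by positivity
  generalize √(2 * Real.pi) = A at *
  generalize √(1 / (1 - 2 * s)) = B at *
  field_simp

lemma lintegral_exp_sq_le (s : ℝ) (hs : s = 1/16 ∨ s = -(1/16)) :
    ∫⁻ x, ENNReal.ofReal (Real.exp (s * (x^2 - 1))) ∂(gaussianReal 0 1)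
      ≤ ENNReal.ofReal (Real.exp (1/128)) := by
  rw [lintegral_exp_sq s (by rcases hs with rfl | rfl <;> norm_num)]
  apply ENNReal.ofReal_le_ofReal
  have key : √(1 / (1 - 2 * s)) ≤ Real.exp (1/128 + s) := by
    rw [Real.sqrt_le_left (Real.exp_pos _).le, ← Real.exp_nat_mul]
    rcases hs with rfl | rfl
    · have := Real.quadratic_le_exp_of_nonneg (x := 9/64) (by norm_num)
      norm_num at this ⊢
      linarith
    · have := Real.add_one_le_exp (-(7/64) : ℝ)
      norm_num at this ⊢
      linarith
  calc _ ≤ Real.exp (-s) * Real.exp (1/128 + s) := by gcongr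
    _ = _ := by rw [← Real.exp_add]; congr 1; ring

section net
open Metric Module
variable {E : Type*} [NormedAddCommGroup E] [NormedSpace ℝ E] [FiniteDimensional ℝ E]

theorem card_sep (s : Finset E) (hs : ∀ c ∈ s, ‖c‖ ≤ 1)
    (h : ∀ c ∈ s, ∀ d ∈ s, c ≠ d → 1/4 ≤ ‖c - d‖) : s.card ≤ 9 ^ finrank ℝ E := by
  borelize E
  let μ : Measure E := Measure.addHaar
  let δ : ℝ := (1 : ℝ) / 8
  let ρ : ℝ := (9 : ℝ) / 8
  have ρpos : 0 < ρ := by norm_num [ρ]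
  set A := ⋃ c ∈ s, ball (c : E) δ with hA
  have D : Set.Pairwise (s : Set E) (Function.onFun Disjoint fun c => ball (c : E) δ) := by
    rintro c hc d hd hcd
    apply ball_disjoint_ball
    rw [dist_eq_norm]
    have := h c hc d hd hcd
    simp only [δ]; linarith
  have A_subset : A ⊆ ball (0 : E) ρ := by
    refine Set.iUnion₂_subset fun x hx => ?_
    apply ball_subset_ball'
    have := hs x hx
    rw [dist_zero_right]; simp only [δ, ρ]; linarith
  have I :
    (s.card : ENNReal) * ENNReal.ofReal (δ ^ finrank ℝ E) * μ (ball 0 1) ≤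
      ENNReal.ofReal (ρ ^ finrank ℝ E) * μ (ball 0 1) :=
    calc
      (s.card : ENNReal) * ENNReal.ofReal (δ ^ finrank ℝ E) * μ (ball 0 1) = μ A := by
        rw [hA, measure_biUnion_finset D fun c _ => measurableSet_ball]
        have I : 0 < δ := by norm_num [δ]
        simp only [μ.addHaar_ball_of_pos _ I]
        simp only [Finset.sum_const, nsmul_eq_mul, mul_assoc]
      _ ≤ μ (ball (0 : E) ρ) := measure_mono A_subset
      _ = ENNReal.ofReal (ρ ^ finrank ℝ E) * μ (ball 0 1) := by
        simp only [μ.addHaar_ball_of_pos _ ρpos]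
  have J : (s.card : ENNReal) * ENNReal.ofReal (δ ^ finrank ℝ E) ≤ ENNReal.ofReal (ρ ^ finrank ℝ E) :=
    (ENNReal.mul_le_mul_iff_left (measure_ball_pos _ _ zero_lt_one).ne' measure_ball_lt_top.ne).1 I
  have K : (s.card : ℝ) ≤ (9 : ℝ) ^ finrank ℝ E := by
    have := ENNReal.toReal_le_of_le_ofReal (pow_nonneg ρpos.le _) J
    simpa [ρ, δ, div_eq_mul_inv, mul_pow] using this
  exact mod_cast K

theorem exists_net (E : Type*) [NormedAddCommGroup E] [NormedSpace ℝ E] [FiniteDimensional ℝ E] :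
    ∃ s : Finset E, s.card ≤ 9 ^ finrank ℝ E ∧ (∀ c ∈ s, ‖c‖ = 1) ∧
      ∀ x : E, ‖x‖ = 1 → ∃ c ∈ s, ‖x - c‖ ≤ 1/4 := by
  classical
  let P : Finset E → Prop := fun s => (∀ c ∈ s, ‖c‖ = 1) ∧
    ∀ c ∈ s, ∀ d ∈ s, c ≠ d → 1/4 ≤ ‖c - d‖
  have hP : ∀ s, P s → s.card ≤ 9 ^ finrank ℝ E := fun s hs =>
    card_sep s (fun c hc => (hs.1 c hc).le) hs.2
  let Q : ℕ → Prop := fun n => ∃ s, P s ∧ s.card = n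
  have hQ0 : Q 0 := ⟨∅, by simp [P], rfl⟩
  obtain ⟨s, hs, hcard⟩ := Nat.findGreatest_spec (P := Q) (Nat.zero_le (9 ^ finrank ℝ E)) hQ0
  refine ⟨s, hP s hs, hs.1, fun x hx => ?_⟩
  by_contra! hcon
  have hx' : x ∉ s := fun hxs => by
    have := hcon x hxs; simp at this; linarith
  have hins : P (insert x s) := by
    refine ⟨?_, ?_⟩
    · intro c hc
      rcases Finset.mem_insert.1 hc with rfl | hc
      · exact hx
      · exact hs.1 c hc
    · intro c hc d hd hcd
      rcases Finset.mem_insert.1 hc with hc' | hc' <;> rcases Finset.mem_insert.1 hd with hd' | hd'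
      · exact absurd (hc'.trans hd'.symm) hcd
      · rw [hc']; exact (hcon d hd').le
      · rw [hd', norm_sub_rev]; exact (hcon c hc').le
      · exact hs.2 c hc' d hd' hcd
  have h1 := Nat.le_findGreatest (P := Q) (hP _ hins) ⟨_, hins, rfl⟩
  rw [← hcard, Finset.card_insert_of_notMem hx'] at h1
  omega
end net

/-- quadratic forms controlled on a net -/
lemma net_bound {n : Type*} [Fintype n] [DecidableEq n] (A : Matrix n n ℝ) (hA : A.IsSymm)
    (s : Finset (EuclideanSpace ℝ n))
    (hs : ∀ x : EuclideanSpace ℝ n, ‖x‖ = 1 → ∃ c ∈ s, ‖x - c‖ ≤ 1/4)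
    (hs1 : ∀ c ∈ s, ‖c‖ = 1) (t : ℝ)
    (ht : ∀ c ∈ s, |c.ofLp ⬝ᵥ A *ᵥ c.ofLp| ≤ t) (x : EuclideanSpace ℝ n) :
    |x.ofLp ⬝ᵥ A *ᵥ x.ofLp| ≤ 2 * t * ‖x‖ ^ 2 := by
  let q : EuclideanSpace ℝ n → ℝ := fun x => x.ofLp ⬝ᵥ A *ᵥ x.ofLp
  have hsm : ∀ (a : ℝ) x, q (a • x) = a ^ 2 * q x := by
    intro a x
    simp [q, Matrix.mulVec_smul]; ring
  by_cases hx : x = 0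
  · subst hx; simp
  have hx0 : 0 < ‖x‖ := norm_pos_iff.2 hx
  have hcont : Continuous fun x => |q x| := by
    simp only [q, dotProduct, mulVec]
    fun_prop
  obtain ⟨z, hz, hmax⟩ := (isCompact_sphere (0 : EuclideanSpace ℝ n) 1).exists_isMaxOn
    ⟨‖x‖⁻¹ • x, by simp [norm_smul, hx0.ne']⟩ hcont.continuousOn
  have hz1 : ‖z‖ = 1 := by simpa using hz
  have hM : ∀ y, |q y| ≤ |q z| * ‖y‖ ^ 2 := by
    intro y
    by_cases hy : y = 0
    · subst hy; simp [q]
    have hy0 : 0 < ‖y‖ := norm_pos_iff.2 hy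
    have := hmax (a := ‖y‖⁻¹ • y) (by simp [norm_smul, hy0.ne'])
    simp only [Set.mem_ofPred_eq, hsm, abs_mul] at this
    rw [abs_of_nonneg (by positivity), inv_pow, inv_mul_le_iff₀ (by positivity)] at this
    linarith
  obtain ⟨c, hc, hzc⟩ := hs z hz1
  have hc1 := hs1 c hc
  have hct : |q c| ≤ t := ht c hc
  -- polarization
  have hpol : 32 * (q z - q c) = q ((8:ℝ) • (z - c) + (z + c)) - q ((8:ℝ) • (z - c) - (z + c)) := by
    have hsymm : ∀ a b : n → ℝ, a ⬝ᵥ A *ᵥ b = b ⬝ᵥ A *ᵥ a := by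
      intro a b
      rw [dotProduct_mulVec, ← mulVec_transpose, hA.eq, dotProduct_comm]
    simp only [q, WithLp.ofLp_add, WithLp.ofLp_sub, WithLp.ofLp_smul, mulVec_add, mulVec_sub,
      mulVec_smul, dotProduct_add, dotProduct_sub, dotProduct_smul, add_dotProduct,
      sub_dotProduct, smul_dotProduct, smul_eq_mul]
    rw [hsymm z.ofLp c.ofLp]; ring
  have hpar := parallelogram_law_with_norm ℝ ((8:ℝ) • (z - c)) (z + c)
  have h8 : ‖(8:ℝ) • (z - c)‖ ≤ 2 := by
    rw [norm_smul]; norm_num; linarith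
  have h2 : ‖z + c‖ ≤ 2 := (norm_add_le _ _).trans (by linarith)
  have hb1 := hM ((8:ℝ) • (z - c) + (z + c))
  have hb2 := hM ((8:ℝ) • (z - c) - (z + c))
  have hq : |q z| ≤ 2 * t := by
    have h3 : |q z| ≤ |q c| + |q z - q c| := by
      have := abs_add_le (q c) (q z - q c); simpa using this
    have h4 : |32 * (q z - q c)| ≤ |q z| * 16 := by
      rw [hpol]
      refine (abs_sub _ _).trans ?_
      have : ‖(8:ℝ) • (z - c) + (z + c)‖ ^ 2 + ‖(8:ℝ) • (z - c) - (z + c)‖ ^ 2 ≤ 16 := by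
        nlinarith [norm_nonneg ((8:ℝ) • (z - c)), norm_nonneg (z + c)]
      nlinarith [abs_nonneg (q z)]
    rw [abs_mul] at h4
    norm_num at h4
    linarith
  have := hM x
  change |q x| ≤ _
  nlinarith [sq_nonneg ‖x‖]

/-- Chi-square-type product computation. -/
lemma lintegral_prod_gauss {Ω J : Type*} [MeasurableSpace Ω] [DecidableEq J] (P : Measure Ω) (S : Finset J)
    (Y : J → Ω → ℝ) (hYm : ∀ j, Measurable (Y j))
    (hY : HasGaussianLaw (fun ω (j : S) => Y j ω) P)
    (h0 : ∀ j, ∫ ω, Y j ω ∂P = 0)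
    (hv : ∀ j, cov[Y j, Y j; P] = 1)
    (hc : ∀ i ∈ S, ∀ j ∈ S, i ≠ j → cov[Y i, Y j; P] = 0)
    (g : ℝ → ENNReal) (hg : Measurable g) :
    ∫⁻ ω, ∏ j ∈ S, g (Y j ω) ∂P = (∫⁻ x, g x ∂(gaussianReal 0 1)) ^ S.card := by
  have hind : iIndepFun (fun j : S => Y j) P :=
    HasGaussianLaw.iIndepFun_of_covariance_eq_zero hY fun i j hij =>
      hc i i.2 j j.2 (fun h => hij (Subtype.ext h))
  have hind2 : iIndepFun (fun (j : S) ω => g (Y j ω)) P :=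
    hind.comp (fun _ => g) (fun _ => hg)
  have := lintegral_prod_eq_prod_lintegral_of_indepFun Finset.univ _ hind2
    (fun i => hg.comp (hYm i))
  have e : ∀ ω, ∏ j ∈ S, g (Y j ω) = ∏ j : S, g (Y j ω) := fun ω =>
    (Finset.prod_coe_sort S (fun j => g (Y j ω))).symm
  simp_rw [e]
  rw [this]
  have hl : ∀ j : S, ∫⁻ ω, g (Y j ω) ∂P = ∫⁻ x, g x ∂(gaussianReal 0 1) := by
    intro j
    have h1 : P.map (Y j) = gaussianReal 0 1 := by
      have := (HasGaussianLaw.eval (X := fun (j : S) ω => Y j ω) hY j).map_eq_gaussianReal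
      have hvar : Var[Y j; P] = 1 := by rw [← covariance_self (hYm j).aemeasurable]; exact hv j
      rw [this, h0 j, hvar]; simp
    rw [← h1, lintegral_map hg (hYm j)]
  simp [hl]


/-- the joint law of all inputs -/
noncomputable def muG (k m : ℕ) : Measure (Fin k → Fin m → ℝ) :=
  Measure.pi fun _ : Fin k => stdGaussianPi m

instance (m : ℕ) : IsProbabilityMeasure (stdGaussianPi m) := by
  unfold stdGaussianPi; infer_instance

instance (k m : ℕ) : IsProbabilityMeasure (muG k m) := by
  unfold muG; infer_instance

instance (m : ℕ) : IsGaussian (stdGaussianPi m) := by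
  have h : HasGaussianLaw (fun (ω : Fin m → ℝ) i => ω i) (stdGaussianPi m) := by
    refine iIndepFun.hasGaussianLaw (X := fun i (ω : Fin m → ℝ) => ω i) (fun i => ?_) ?_
    · refine HasLaw.hasGaussianLaw (μ := gaussianReal 0 1) ⟨(measurable_pi_apply i).aemeasurable, ?_⟩
      exact (measurePreserving_eval (fun _ : Fin m => gaussianReal 0 1) i).map_eq
    · exact iIndepFun_pi (X := fun _ => id) (fun _ => aemeasurable_id)
  have := h.isGaussian_map
  simpa using this

lemma gauss_muG (k m : ℕ) : HasGaussianLaw (fun (u : Fin k → Fin m → ℝ) i => u i) (muG k m) := by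
  refine iIndepFun.hasGaussianLaw (X := fun i (ω : Fin k → Fin m → ℝ) => ω i) (fun i => ?_) ?_
  · refine HasLaw.hasGaussianLaw (μ := stdGaussianPi m) ⟨(measurable_pi_apply i).aemeasurable, ?_⟩
    exact (measurePreserving_eval (fun _ : Fin k => stdGaussianPi m) i).map_eq
  · exact iIndepFun_pi (X := fun _ => id) (fun _ => aemeasurable_id)

lemma mp_coord (k m : ℕ) (t : Fin k) (r : Fin m) :
    MeasurePreserving (fun u : Fin k → Fin m → ℝ => u t r) (muG k m) (gaussianReal 0 1) :=
  (measurePreserving_eval (fun _ : Fin m => gaussianReal 0 1) r).comp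
    (measurePreserving_eval (fun _ : Fin k => stdGaussianPi m) t)

lemma memLp_coord (k m : ℕ) (a : Fin k × Fin m) :
    MemLp (fun u : Fin k → Fin m → ℝ => u a.1 a.2) 2 (muG k m) :=
  (memLp_id_gaussianReal 2).comp_measurePreserving (mp_coord k m a.1 a.2)

lemma mean_coord (k m : ℕ) (a : Fin k × Fin m) :
    ∫ u : Fin k → Fin m → ℝ, u a.1 a.2 ∂(muG k m) = 0 := by
  have h := mp_coord k m a.1 a.2
  rw [← integral_map (f := fun x : ℝ => x) h.measurable.aemeasurable (by fun_prop), h.map_eq]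
  simp

lemma cov_coord (k m : ℕ) (a b : Fin k × Fin m) :
    cov[fun u : Fin k → Fin m → ℝ => u a.1 a.2, fun u => u b.1 b.2; muG k m]
      = if a = b then 1 else 0 := by
  split_ifs with h
  · subst h
    have h := mp_coord k m a.1 a.2
    rw [covariance_self h.measurable.aemeasurable]
    have := variance_map (X := id) (Y := fun u : Fin k → Fin m → ℝ => u a.1 a.2) (μ := muG k m)
      (by fun_prop) h.measurable.aemeasurable
    rw [h.map_eq] at this
    simpa [Function.comp_def] using this.symm
  · apply IndepFun.covariance_eq_zero _ (memLp_coord k m a) (memLp_coord k m b)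
    by_cases h1 : a.1 = b.1
    · have h2 : a.2 ≠ b.2 := fun h2 => h (Prod.ext h1 h2)
      have hi : iIndepFun (fun (i : Fin m) (ω : Fin m → ℝ) => ω i) (stdGaussianPi m) :=
        iIndepFun_pi (X := fun _ => id) (fun _ => aemeasurable_id)
      have h3 := hi.indepFun h2
      have hmp := measurePreserving_eval (fun _ : Fin k => stdGaussianPi m) b.1
      rw [h1]
      rw [← hmp.map_eq] at h3
      have e1 : ∀ r : Fin m, Measurable fun ω : Fin m → ℝ => ω r := fun r => measurable_pi_apply r
      have e2 : ∀ r : Fin m, Measurable fun u : Fin k → Fin m → ℝ => u b.1 r := fun r =>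
        (mp_coord k m b.1 r).measurable
      rw [indepFun_iff_map_prod_eq_prod_map_map (e1 _).aemeasurable (e1 _).aemeasurable] at h3
      rw [indepFun_iff_map_prod_eq_prod_map_map (e2 _).aemeasurable (e2 _).aemeasurable]
      rw [Measure.map_map (by fun_prop) hmp.measurable, Measure.map_map (by fun_prop) hmp.measurable,
        Measure.map_map (by fun_prop) hmp.measurable] at h3
      exact h3
    · have hi : iIndepFun (fun (i : Fin k) (ω : Fin k → Fin m → ℝ) => ω i) (muG k m) :=
        iIndepFun_pi (X := fun _ => id) (fun _ => aemeasurable_id)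
      have e1 : ∀ r : Fin m, Measurable fun ω : Fin m → ℝ => ω r := fun r => measurable_pi_apply r
      exact (hi.indepFun h1).comp (e1 a.2) (e1 b.2)

section lin
variable {k m : ℕ} {I J : Type*} [Fintype I]

/-- the linear statistic -/
def linY (w : I → ℝ) (φ : J → I → Fin k × Fin m) (j : J) (u : Fin k → Fin m → ℝ) : ℝ :=
  ∑ i, w i * u (φ j i).1 (φ j i).2

lemma linY_meas (w : I → ℝ) (φ : J → I → Fin k × Fin m) (j : J) : Measurable (linY w φ j) := by
  unfold linY; fun_prop

lemma linY_mean (w : I → ℝ) (φ : J → I → Fin k × Fin m) (j : J) :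
    ∫ u, linY w φ j u ∂(muG k m) = 0 := by
  unfold linY
  rw [integral_finsetSum]
  · refine Finset.sum_eq_zero fun i _ => ?_
    rw [integral_const_mul, mean_coord, mul_zero]
  · intro i _
    exact ((memLp_coord k m _).integrable (by norm_num)).const_mul _

lemma linY_cov (w : I → ℝ) (φ : J → I → Fin k × Fin m) (j j' : J) :
    cov[linY w φ j, linY w φ j'; muG k m]
      = ∑ i, ∑ i', w i * w i' * (if φ j i = φ j' i' then 1 else 0) := by
  have h : ∀ j i, MemLp (fun u : Fin k → Fin m → ℝ => w i * u (φ j i).1 (φ j i).2) 2 (muG k m) :=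
    fun j i => (memLp_coord k m _).const_mul _
  have := covariance_fun_sum_fun_sum (h j) (h j')
  unfold linY
  refine this.trans ?_
  refine Finset.sum_congr rfl fun i _ => Finset.sum_congr rfl fun i' _ => ?_
  rw [covariance_const_mul_left, covariance_const_mul_right, cov_coord]
  ring

lemma linY_gauss (w : I → ℝ) (φ : J → I → Fin k × Fin m) (S : Finset J) :
    HasGaussianLaw (fun u (j : S) => linY w φ j u) (muG k m) := by
  let L : (Fin k → Fin m → ℝ) →L[ℝ] (S → ℝ) :=
    ContinuousLinearMap.pi fun j => ∑ i, w i •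
      ((ContinuousLinearMap.proj (R := ℝ) (φ := fun _ : Fin m => ℝ) (φ j i).2).comp
        (ContinuousLinearMap.proj (R := ℝ) (φ := fun _ : Fin k => Fin m → ℝ) (φ j i).1))
  have := (gauss_muG k m).map_fun L
  have e : (fun u (j : S) => linY w φ j u) = fun u => L fun i => u i := by
    ext u j
    simp [L, linY]
  rw [e]
  exact this

end lin

/-- index map of the Toeplitz matrix -/
def phiT {m : ℕ} (k p : ℕ) (hpk : p ≤ k) (j : Fin (k - p + 1)) (ir : Fin p × Fin m) :
    Fin k × Fin m :=
  (⟨k - p + (ir.1 : ℕ) - (j : ℕ), by have := ir.1.isLt; omega⟩, ir.2)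

lemma quad_eq {m k p : ℕ} (hpk : p ≤ k) (w : Fin p × Fin m → ℝ) (u : Fin k → Fin m → ℝ) :
    w ⬝ᵥ (toepU k p hpk u * (toepU k p hpk u)ᵀ) *ᵥ w
      = ∑ j, (linY w (phiT k p hpk) j u) ^ 2 := by
  have h : ∀ j, ((toepU k p hpk u)ᵀ *ᵥ w) j = linY w (phiT k p hpk) j u := by
    intro j
    simp only [mulVec, dotProduct, linY, transpose_apply, toepU, phiT, of_apply]
    exact Finset.sum_congr rfl fun i _ => mul_comm _ _
  rw [← mulVec_mulVec, dotProduct_mulVec, ← mulVec_transpose]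
  simp only [dotProduct, h, sq]

lemma phiT_inj {m k p : ℕ} (hpk : p ≤ k) (j : Fin (k - p + 1)) (a b : Fin p × Fin m) :
    phiT k p hpk j a = phiT k p hpk j b ↔ a = b := by
  refine ⟨fun h => ?_, fun h => by rw [h]⟩
  simp only [phiT, Prod.mk.injEq, Fin.mk.injEq] at h
  have := j.isLt
  exact Prod.ext (Fin.ext (by omega)) h.2

lemma phiT_ne {m k p : ℕ} (hpk : p ≤ k) (i j : Fin (k - p + 1)) (hij : i ≠ j)
    (hmod : (i : ℕ) % p = (j : ℕ) % p) (a b : Fin p × Fin m) :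
    phiT k p hpk i a ≠ phiT k p hpk j b := by
  intro h
  simp only [phiT, Prod.mk.injEq, Fin.mk.injEq] at h
  have h1 := i.isLt
  have h2 := j.isLt
  have h3 := a.1.isLt
  have h4 := b.1.isLt
  have hd : (p : ℤ) ∣ (j : ℕ) - (i : ℕ) := (Nat.modEq_iff_dvd (n := p)).1 hmod
  have := Int.eq_zero_of_abs_lt_dvd hd (by rw [abs_lt]; omega)
  exact hij (Fin.ext (by omega))

lemma mgf_bound {m k p : ℕ} (hp : 2 ≤ p) (hpk : p ≤ k) (w : Fin p × Fin m → ℝ)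
    (hw : ∑ i, w i ^ 2 = 1) (s : ℝ) (hs : s = 1/16 ∨ s = -(1/16)) :
    ∫⁻ u, ENNReal.ofReal (Real.exp (s / p *
        (∑ j, (linY w (phiT k p hpk) j u) ^ 2 - ((k - p + 1 : ℕ) : ℝ)))) ∂(muG k m)
      ≤ ENNReal.ofReal (Real.exp (((k - p + 1 : ℕ) : ℝ) / (128 * p))) := by
  have hp0 : (0 : ℝ) < p := by positivity
  set Y := linY w (phiT k p hpk) with hYdef
  let S : Fin p → Finset (Fin (k - p + 1)) := fun r =>
    Finset.univ.filter fun j => (⟨(j : ℕ) % p, Nat.mod_lt _ (by omega)⟩ : Fin p) = r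
  let g : ℝ → ENNReal := fun x => ENNReal.ofReal (Real.exp (s * (x ^ 2 - 1)))
  have hg : Measurable g := by fun_prop
  have hv : ∀ j, cov[Y j, Y j; muG k m] = 1 := by
    intro j
    rw [linY_cov]
    simp only [phiT_inj]
    simpa [sq] using hw
  have hcls : ∀ r, ∫⁻ u, ∏ j ∈ S r, g (Y j u) ∂(muG k m)
      ≤ ENNReal.ofReal (Real.exp (1/128)) ^ (S r).card := by
    intro r
    rw [lintegral_prod_gauss (muG k m) (S r) Y (linY_meas _ _) (linY_gauss _ _ _)
      (linY_mean _ _) hv ?_ g hg]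
    · gcongr
      exact lintegral_exp_sq_le s hs
    · intro i hi j hj hij
      rw [linY_cov]
      have hmod : (i : ℕ) % p = (j : ℕ) % p := by
        have := (Finset.mem_filter.1 hi).2.trans (Finset.mem_filter.1 hj).2.symm
        simpa using this
      simp [phiT_ne hpk i j hij hmod]
  have hrew : ∀ u, ENNReal.ofReal (Real.exp (s / p *
        (∑ j, (Y j u) ^ 2 - ((k - p + 1 : ℕ) : ℝ))))
      = ∏ r : Fin p, (∏ j ∈ S r, g (Y j u)) ^ ((1:ℝ) / p) := by
    intro u
    rw [ENNReal.prod_rpow_of_nonneg (by positivity), Finset.prod_fiberwise]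
    simp only [g]
    rw [← ENNReal.ofReal_prod_of_nonneg (fun _ _ => (Real.exp_pos _).le), ← Real.exp_sum,
      ENNReal.ofReal_rpow_of_pos (Real.exp_pos _), ← Real.exp_mul, ← Finset.mul_sum,
      Finset.sum_sub_distrib]
    congr 2
    simp
    ring
  simp_rw [hrew]
  refine (ENNReal.lintegral_prod_norm_pow_le Finset.univ
    (f := fun r u => ∏ j ∈ S r, g (Y j u)) (p := fun _ => (1:ℝ)/p) ?_ ?_ ?_).trans ?_
  · intro r _
    refine Measurable.aemeasurable ?_
    exact Finset.measurable_fun_prod _ fun j _ => hg.comp (linY_meas _ _ j)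
  · simp [hp0.ne']
  · intros; positivity
  · calc _ ≤ ∏ r : Fin p, (ENNReal.ofReal (Real.exp (1/128)) ^ (S r).card) ^ ((1:ℝ)/p) := by
          gcongr with r _
          exact hcls r
      _ = _ := by
          rw [ENNReal.prod_rpow_of_nonneg (by positivity), Finset.prod_pow_eq_pow_sum]
          have : ∑ r, (S r).card = k - p + 1 := by
            rw [← Finset.card_eq_sum_card_fiberwise (fun _ _ => by simp)]
            simp
          rw [this, ← ENNReal.ofReal_pow (Real.exp_pos _).le, ← Real.exp_nat_mul,
            ENNReal.ofReal_rpow_of_pos (Real.exp_pos _), ← Real.exp_mul]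
          congr 2
          field_simp

lemma tail_bound {m k p : ℕ} (hp : 2 ≤ p) (hpk : p ≤ k) (w : Fin p × Fin m → ℝ)
    (hw : ∑ i, w i ^ 2 = 1) (s : ℝ) (hs : s = 1/16 ∨ s = -(1/16)) :
    muG k m {u | ((k - p + 1 : ℕ) : ℝ) / 64 ≤ s *
        (∑ j, (linY w (phiT k p hpk) j u) ^ 2 - ((k - p + 1 : ℕ) : ℝ))}
      ≤ ENNReal.ofReal (Real.exp (-(((k - p + 1 : ℕ) : ℝ) / (128 * p)))) := by
  have hp0 : (0 : ℝ) < p := by positivity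
  set N : ℝ := ((k - p + 1 : ℕ) : ℝ) with hN
  set Y := linY w (phiT k p hpk) with hYdef
  have hm : Measurable fun u => ENNReal.ofReal (Real.exp (s / p * (∑ j, (Y j u) ^ 2 - N))) := by
    have := linY_meas w (phiT k p hpk)
    fun_prop
  have h1 := mul_meas_ge_le_lintegral (μ := muG k m) hm (ENNReal.ofReal (Real.exp (N / (64 * p))))
  have h2 := h1.trans (mgf_bound hp hpk w hw s hs)
  have hsub : {u | N / 64 ≤ s * (∑ j, (Y j u) ^ 2 - N)} ⊆
      {u | ENNReal.ofReal (Real.exp (N / (64 * p))) ≤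
        ENNReal.ofReal (Real.exp (s / p * (∑ j, (Y j u) ^ 2 - N)))} := by
    intro u hu
    simp only [Set.mem_ofPred_eq] at hu ⊢
    apply ENNReal.ofReal_le_ofReal
    apply Real.exp_le_exp.2
    calc N / (64 * p) = N / 64 / p := by field_simp
      _ ≤ (s * (∑ j, (Y j u) ^ 2 - N)) / p := by gcongr
      _ = _ := by ring
  have h3 : ENNReal.ofReal (Real.exp (N / (128 * p)))
      = ENNReal.ofReal (Real.exp (N / (64 * p))) * ENNReal.ofReal (Real.exp (-(N / (128 * p)))) := by
    rw [← ENNReal.ofReal_mul (Real.exp_pos _).le, ← Real.exp_add]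
    congr 2
    field_simp
    norm_num
  rw [h3] at h2
  refine (measure_mono hsub).trans ?_
  exact (ENNReal.mul_le_mul_iff_right (by simp [Real.exp_pos]) (by simp)).1 h2

/-- persistency of excitation of the Gaussian block Toeplitz matrix:
if `k ≥ p + 128(m p² log 9 + p log 2 + p log(1/δ))` then with probability at least
`1 - δ`, `(1/2)(k-p+1) I ⪯ U Uᵀ ⪯ (3/2)(k-p+1) I`. -/
theorem toeplitz_gaussian_pe {m k p : ℕ} (hp : 2 ≤ p) (hpk : p ≤ k)
    (δ : ℝ) (hδ : 0 < δ)
    (hk : (p : ℝ) + 128 * (m * p ^ 2 * Real.log 9 + p * Real.log 2 +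
        p * Real.log (1 / δ)) ≤ (k : ℝ)) :
    ENNReal.ofReal (1 - δ) ≤
      (Measure.pi fun _ : Fin k => stdGaussianPi m)
        {u | (toepU k p hpk u * (toepU k p hpk u)ᵀ -
              ((1 / 2 : ℝ) * ((k : ℝ) - p + 1)) •
                (1 : Matrix (Fin p × Fin m) (Fin p × Fin m) ℝ)).PosSemidef ∧
          (((3 / 2 : ℝ) * ((k : ℝ) - p + 1)) •
              (1 : Matrix (Fin p × Fin m) (Fin p × Fin m) ℝ) -
            toepU k p hpk u * (toepU k p hpk u)ᵀ).PosSemidef} := by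
  have hp0 : (0 : ℝ) < p := by positivity
  have hNeq : (k : ℝ) - p + 1 = ((k - p + 1 : ℕ) : ℝ) := by
    push_cast [Nat.cast_sub hpk]; ring
  rw [hNeq]
  obtain ⟨s, hcard, hs1, hnet⟩ := exists_net (EuclideanSpace ℝ (Fin p × Fin m))
  set N : ℝ := ((k - p + 1 : ℕ) : ℝ) with hN
  have hN0 : 0 < N := by rw [hN]; positivity
  let Q : EuclideanSpace ℝ (Fin p × Fin m) → (Fin k → Fin m → ℝ) → ℝ := fun w u =>
    ∑ j, (linY w.ofLp (phiT k p hpk) j u) ^ 2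
  have hQm : ∀ w, Measurable (Q w) := fun w => by
    have := linY_meas w.ofLp (phiT k p hpk)
    fun_prop
  let B : EuclideanSpace ℝ (Fin p × Fin m) → ℝ → Set (Fin k → Fin m → ℝ) := fun w t =>
    {u | N / 64 ≤ t * (Q w u - N)}
  let bad : Set (Fin k → Fin m → ℝ) := ⋃ w ∈ s, (B w (1/16) ∪ B w (-(1/16)))
  have hBm : ∀ w t, MeasurableSet (B w t) := fun w t =>
    measurableSet_le measurable_const (((hQm w).sub_const N).const_mul t)
  have hbm : MeasurableSet bad :=
    Finset.measurableSet_biUnion _ fun w _ => (hBm w _).union (hBm w _)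
  have hnorm : ∀ w : EuclideanSpace ℝ (Fin p × Fin m), ∑ i, w.ofLp i ^ 2 = ‖w‖ ^ 2 := fun w => by
    rw [EuclideanSpace.real_norm_sq_eq]
  have hbad : muG k m bad ≤ ENNReal.ofReal δ := by
    set e := Real.exp (-(N / (128 * p))) with he
    have hB : ∀ w ∈ s, muG k m (B w (1/16) ∪ B w (-(1/16))) ≤ ENNReal.ofReal (2 * e) := by
      intro w hw
      have hw1 : ∑ i, w.ofLp i ^ 2 = 1 := by rw [hnorm, hs1 w hw]; norm_num
      refine (measure_union_le _ _).trans ?_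
      rw [two_mul, ENNReal.ofReal_add (Real.exp_pos _).le (Real.exp_pos _).le]
      exact add_le_add (tail_bound hp hpk w.ofLp hw1 _ (Or.inl rfl))
        (tail_bound hp hpk w.ofLp hw1 _ (Or.inr rfl))
    calc muG k m bad ≤ ∑ w ∈ s, muG k m (B w (1/16) ∪ B w (-(1/16))) :=
          measure_biUnion_finset_le _ _
      _ ≤ ∑ w ∈ s, ENNReal.ofReal (2 * e) := Finset.sum_le_sum hB
      _ = ENNReal.ofReal (s.card * (2 * e)) := by
          rw [Finset.sum_const, nsmul_eq_mul, ENNReal.ofReal_mul (p := (s.card : ℝ)) (by positivity),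
            ENNReal.ofReal_natCast]
      _ ≤ ENNReal.ofReal δ := by
          apply ENNReal.ofReal_le_ofReal
          have hc : (s.card : ℝ) ≤ 9 ^ (p * m) := by
            have : s.card ≤ 9 ^ (p * m) := by simpa using hcard
            exact_mod_cast this
          have h9 : (9 : ℝ) ^ (p * m) = Real.exp ((p * m) * Real.log 9) := by
            rw [← Nat.cast_mul, Real.exp_nat_mul, Real.exp_log (by norm_num)]
          have h2 : (2 : ℝ) = Real.exp (Real.log 2) := (Real.exp_log (by norm_num)).symm
          calc (s.card : ℝ) * (2 * e) ≤ 9 ^ (p * m) * (2 * e) := by gcongr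
            _ = Real.exp ((p * m) * Real.log 9 + (Real.log 2 + -(N / (128 * p)))) := by
                rw [Real.exp_add, Real.exp_add, ← h9, ← h2]
            _ ≤ Real.exp (Real.log δ) := by
                apply Real.exp_le_exp.2
                have hlog : Real.log (1/δ) = - Real.log δ := by rw [one_div, Real.log_inv]
                rw [hlog] at hk
                have : (p * m) * Real.log 9 + Real.log 2 - Real.log δ ≤ N / (128 * p) := by
                  rw [le_div_iff₀ (by positivity)]
                  nlinarith
                linarith
            _ = δ := Real.exp_log hδ
  have hsub : badᶜ ⊆ {u | (toepU k p hpk u * (toepU k p hpk u)ᵀ -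
              ((1 / 2 : ℝ) * N) •
                (1 : Matrix (Fin p × Fin m) (Fin p × Fin m) ℝ)).PosSemidef ∧
          (((3 / 2 : ℝ) * N) •
              (1 : Matrix (Fin p × Fin m) (Fin p × Fin m) ℝ) -
            toepU k p hpk u * (toepU k p hpk u)ᵀ).PosSemidef} := by
    intro u hu
    set G := toepU k p hpk u * (toepU k p hpk u)ᵀ with hG
    have hGs : Gᵀ = G := by rw [hG, transpose_mul, transpose_transpose]
    have hquad : ∀ (w : Fin p × Fin m → ℝ) (c : ℝ), w ⬝ᵥ (G - c • 1) *ᵥ w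
        = w ⬝ᵥ G *ᵥ w - c * ∑ i, w i ^ 2 := by
      intro w c
      rw [sub_mulVec, dotProduct_sub, smul_mulVec, one_mulVec, dotProduct_smul]
      simp [dotProduct, sq]
    have hQ : ∀ w : EuclideanSpace ℝ (Fin p × Fin m), Q w u = w.ofLp ⬝ᵥ G *ᵥ w.ofLp :=
      fun w => (quad_eq hpk w.ofLp u).symm
    have hnb : ∀ w ∈ s, |w.ofLp ⬝ᵥ (G - N • 1) *ᵥ w.ofLp| ≤ N / 4 := by
      intro w hw
      have hw1 : ∑ i, w.ofLp i ^ 2 = 1 := by rw [hnorm, hs1 w hw]; norm_num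
      rw [hquad, hw1, ← hQ]
      have h1 : u ∉ B w (1/16) := fun h => hu (Set.mem_biUnion hw (Or.inl h))
      have h2 : u ∉ B w (-(1/16)) := fun h => hu (Set.mem_biUnion hw (Or.inr h))
      simp only [B, Set.mem_ofPred_eq, not_le] at h1 h2
      rw [abs_le]; constructor <;> linarith
    have hall := net_bound (G - N • 1) (by
      rw [IsSymm, transpose_sub, hGs, transpose_smul, transpose_one]) s hnet hs1 (N / 4) hnb
    have hall' : ∀ w : Fin p × Fin m → ℝ, |w ⬝ᵥ G *ᵥ w - N * ∑ i, w i ^ 2|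
        ≤ N / 2 * ∑ i, w i ^ 2 := by
      intro w
      have := hall (WithLp.toLp 2 w)
      rw [hquad, ← hnorm] at this
      simp only at this
      linarith
    constructor
    · refine PosSemidef.of_dotProduct_mulVec_nonneg ?_ fun w => ?_
      · rw [IsHermitian, conjTranspose_eq_transpose_of_trivial, transpose_sub, hGs,
          transpose_smul, transpose_one]
      · have := abs_le.1 (hall' w)
        rw [star_trivial, hquad]
        linarith
    · refine PosSemidef.of_dotProduct_mulVec_nonneg ?_ fun w => ?_
      · rw [IsHermitian, conjTranspose_eq_transpose_of_trivial, transpose_sub, hGs,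
          transpose_smul, transpose_one]
      · have := abs_le.1 (hall' w)
        rw [star_trivial, ← neg_sub, neg_mulVec, dotProduct_neg, hquad]
        linarith
  refine le_trans ?_ (measure_mono hsub)
  change _ ≤ muG k m badᶜ
  rw [prob_compl_eq_one_sub hbm, ENNReal.ofReal_sub _ hδ.le, ENNReal.ofReal_one]
  exact tsub_le_tsub_left hbad _
end
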